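/- Let G be a finite group and p an odd prime dividing |G|. If l(G) > 2^{-1/2} · p^{-(p+1)/(2p)} (i.e., l(G) > l(D_{2p})), then G = O_p(G) × O_{p'}(G) with O_p(G) cyclic; in particular G is p-nilpotent. Here l(G) = ρ(G)^(1/|G|)/|G| and ρ(G) is the product of the orders of all elements of G. -/

import Mathlib

/-!
The bound `l(G) > l(D_{2p})` says that the geometric mean of the element orders exceeds
`|G| · 2^{-1/2} p^{-(p+1)/(2p)}`. Since `2 ^ p ≤ p ^ (p - 1)` for `p ≥ 3`, this is at least
`|G| / p`, so some cyclic subgroup `⟨x⟩` has index less than `p`. It contains a Sylow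
`p`-subgroup `⟨y⟩` and normalizes it, so the number of Sylow `p`-subgroups is less than `p`,
hence equal to `1`: the Sylow subgroup is cyclic and normal.

It remains to see that `⟨y⟩` is central. Suppose its centralizer `C` has index `m ≥ 2`. A
`p'`-automorphism of a cyclic `p`-group fixing a subgroup of order `p` is trivial, so the elements
outside `C` have order prime to `p`, hence at most `|G| / p`
(`mem_centralizer_of_dvd_orderOf`). Elements of `C` have order at most `|G| / m`, and
a fraction at least `1 / p` of them, namely those killed by `|C| / p`, have order at most
`|G| / (p m)` (`card_centralizer_le`). Multiplying these bounds gives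
`l(G) ≤ p^{-(m-1)/m - 1/(pm)} m^{-1/m}`, which is at most `l(D_{2p})`, with equality for `m = 2`
(`prod_bound_of_noncentral`). So `⟨y⟩` is central, and Burnside's transfer theorem supplies a
normal `p`-complement. All estimates are carried out in `ℕ`, after raising `l(G) > l(D_{2p})` to
the power `2p|G|`.
-/

noncomputable def lfun (G : Type*) [Group G] [Fintype G] : ℝ :=
  ((∏ g : G, orderOf g : ℕ) : ℝ) ^ ((1 : ℝ) / (Fintype.card G : ℝ)) / (Fintype.card G : ℝ)

noncomputable def psi2 (G : Type*) [Group G] [Fintype G] : ℝ :=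
  ((∑ g : G, orderOf g : ℕ) : ℝ) / ((Fintype.card G : ℝ)) ^ 2

/-- A finite group is p-nilpotent if it has a normal p-complement: a normal subgroup of
order coprime to p and of p-power index. -/
def IsPNilpotent (p : ℕ) (G : Type*) [Group G] : Prop :=
  ∃ N : Subgroup G, N.Normal ∧ Nat.Coprime (Nat.card N) p ∧ ∃ k : ℕ, N.index = p ^ k

/-! ### Elementary facts -/

lemma mem_of_coprime_pow_mem {G : Type*} [Group G] (H : Subgroup G) {x : G} {a b : ℕ}
    (hab : Nat.Coprime a b) (ha : x ^ a ∈ H) (hb : x ^ b ∈ H) : x ∈ H := by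
  have h : x = (x ^ a) ^ (Nat.gcdA a b) * (x ^ b) ^ (Nat.gcdB a b) := by
    rw [← zpow_natCast, ← zpow_natCast, ← zpow_mul, ← zpow_mul, ← zpow_add,
      ← Nat.gcd_eq_gcd_ab, hab.gcd_eq_one]
    simp
  rw [h]
  exact H.mul_mem (H.zpow_mem ha _) (H.zpow_mem hb _)

/-- Equivalently `l(D_{2p}) ≥ 1 / p`. -/
lemma two_pow_le_pow_pred {p : ℕ} (hp : 3 ≤ p) : 2 ^ p ≤ p ^ (p - 1) := by
  obtain ⟨q, rfl⟩ := Nat.exists_eq_add_of_le hp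
  have h1 : 2 ^ (3 + q) ≤ 3 ^ (2 + q) := by
    have : 2 ^ q ≤ 3 ^ q := Nat.pow_le_pow_left (by norm_num) q
    rw [pow_add, pow_add]; omega
  have h2 : 3 ^ (2 + q) ≤ (3 + q) ^ (2 + q) := Nat.pow_le_pow_left (by omega) _
  have h3 : 3 + q - 1 = 2 + q := by omega
  rw [h3]; exact h1.trans h2

/-! ### Consequences of the bound on `l(G)` -/

/-- The hypothesis `l(G) > l(D_{2p})`, raised to the power `2p|G|` and cleared of denominators. -/
lemma nat_of_lfun_gt (G : Type*) [Group G] [Fintype G] (p : ℕ) (hp : p.Prime)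
    (hl : lfun G > (2 : ℝ) ^ (-(1 / 2 : ℝ)) * (p : ℝ) ^ (-(((p : ℝ) + 1) / (2 * (p : ℝ))))) :
    (Fintype.card G) ^ (2 * p * Fintype.card G) <
      (∏ g : G, orderOf g) ^ (2 * p) * 2 ^ (p * Fintype.card G)
        * p ^ ((p + 1) * Fintype.card G) := by
  set n := Fintype.card G with hn
  set r := ∏ g : G, orderOf g with hr
  have hn0 : 0 < n := Fintype.card_pos
  have hnR : (0 : ℝ) < n := by exact_mod_cast hn0
  have hpR : (0 : ℝ) < p := by exact_mod_cast hp.pos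
  unfold lfun at hl
  rw [gt_iff_lt, lt_div_iff₀ hnR, ← hn, ← hr] at hl
  have hpos : (0 : ℝ) ≤ (2 : ℝ) ^ (-(1 / 2 : ℝ)) * (p : ℝ) ^ (-(((p : ℝ) + 1) / (2 * (p : ℝ)))) * n := by
    positivity
  have h2 := pow_lt_pow_left₀ hl hpos (n := 2 * p * n)
    (by have := hp.pos; positivity)
  have e1 : ((2 : ℝ) ^ (-(1 / 2 : ℝ))) ^ (2 * p * n) = ((2 : ℝ) ^ (p * n))⁻¹ := by
    rw [← Real.rpow_natCast, ← Real.rpow_natCast, ← Real.rpow_mul (by norm_num),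
      ← Real.rpow_neg (by norm_num)]
    congr 1; push_cast; ring
  have e2 : ((p : ℝ) ^ (-(((p : ℝ) + 1) / (2 * (p : ℝ))))) ^ (2 * p * n)
      = ((p : ℝ) ^ ((p + 1) * n))⁻¹ := by
    rw [← Real.rpow_natCast, ← Real.rpow_natCast, ← Real.rpow_mul hpR.le,
      ← Real.rpow_neg hpR.le]
    congr 1; push_cast; field_simp
  have e3 : ((r : ℝ) ^ ((1 : ℝ) / n)) ^ (2 * p * n) = (r : ℝ) ^ (2 * p) := by
    rw [← Real.rpow_natCast, ← Real.rpow_natCast, ← Real.rpow_mul (by positivity)]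
    congr 1; push_cast; field_simp
  rw [mul_pow, mul_pow, e1, e2, e3, ← mul_inv, inv_mul_lt_iff₀ (by positivity)] at h2
  have h3 : (n : ℝ) ^ (2 * p * n) < (r : ℝ) ^ (2 * p) * 2 ^ (p * n) * p ^ ((p + 1) * n) := by
    calc _ < _ := h2
      _ = _ := by ring
  exact_mod_cast h3

/-- Some cyclic subgroup has index less than `p`. -/
lemma exists_card_lt_orderOf_mul (G : Type*) [Group G] [Fintype G] (p : ℕ) (hp3 : 3 ≤ p)
    (H : (Fintype.card G) ^ (2 * p * Fintype.card G) <
      (∏ g : G, orderOf g) ^ (2 * p) * 2 ^ (p * Fintype.card G)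
        * p ^ ((p + 1) * Fintype.card G)) :
    ∃ x : G, Fintype.card G < orderOf x * p := by
  by_contra! hcon
  set n := Fintype.card G with hn
  set r := ∏ g : G, orderOf g with hr
  have h1 : r * p ^ n ≤ n ^ n := by
    have := Finset.prod_le_prod' (s := (Finset.univ : Finset G)) (fun g _ => hcon g)
    rw [Finset.prod_mul_distrib, Finset.prod_const, Finset.prod_const, Finset.card_univ] at this
    exact this
  have h2 := Nat.pow_le_pow_left h1 (2 * p)
  have h3 : 2 ^ (p * n) * p ^ ((p + 1) * n) ≤ p ^ (2 * p * n) := by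
    rw [pow_mul, pow_mul, pow_mul _ (2 * p) n, ← mul_pow]
    apply Nat.pow_le_pow_left
    calc _ ≤ p ^ (p - 1) * p ^ (p + 1) := Nat.mul_le_mul_right _ (two_pow_le_pow_pred hp3)
      _ = p ^ (2 * p) := by rw [← pow_add]; congr 1; omega
  apply absurd H
  rw [not_lt]
  calc _ = r ^ (2 * p) * (2 ^ (p * n) * p ^ ((p + 1) * n)) := by ring
    _ ≤ r ^ (2 * p) * p ^ (2 * p * n) := Nat.mul_le_mul_left _ h3
    _ = (r * p ^ n) ^ (2 * p) := by ring
    _ ≤ (n ^ n) ^ (2 * p) := h2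
    _ = _ := by ring

/-- A subgroup of index less than `p` contains a Sylow `p`-subgroup, here cyclic; its normalizer
has index less than `p`, so it is the only one. -/
lemma exists_normal_cyclic_sylow (G : Type*) [Group G] [Fintype G] (p : ℕ) [Fact p.Prime]
    (x : G) (hx : Fintype.card G < orderOf x * p) :
    ∃ (y : G) (a : ℕ), orderOf y = p ^ a ∧ ¬ p ∣ (Subgroup.zpowers y).index ∧
      (Subgroup.zpowers y).Normal := by
  have hp : p.Prime := Fact.out
  obtain ⟨a, k, hk, hak⟩ :=
    Nat.exists_eq_pow_mul_and_not_dvd (orderOf_pos x).ne' p hp.one_lt.ne'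
  have hk0 : k ≠ 0 := by rintro rfl; exact hk (dvd_zero _)
  have hy : orderOf (x ^ k) = p ^ a := by
    rw [orderOf_pow_of_dvd hk0 (by rw [hak]; exact dvd_mul_left _ _), hak,
      Nat.mul_div_cancel _ (Nat.pos_of_ne_zero hk0)]
  have hix := Subgroup.card_mul_index (Subgroup.zpowers x)
  have hiy := Subgroup.card_mul_index (Subgroup.zpowers (x ^ k))
  rw [Nat.card_zpowers, Nat.card_eq_fintype_card] at hix hiy
  have hlt : (Subgroup.zpowers x).index < p := by
    rw [← hix] at hx
    exact lt_of_mul_lt_mul_left hx (Nat.zero_le _)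
  have hpos : 0 < (Subgroup.zpowers x).index := Nat.pos_of_ne_zero Subgroup.index_ne_zero_of_finite
  have hidx : (Subgroup.zpowers (x ^ k)).index = k * (Subgroup.zpowers x).index := by
    rw [hy, ← hix, hak, mul_assoc] at hiy
    exact Nat.eq_of_mul_eq_mul_left (pow_pos hp.pos _) hiy
  have hnd : ¬ p ∣ (Subgroup.zpowers (x ^ k)).index := by
    rw [hidx, hp.dvd_mul]
    rintro (h | h)
    · exact hk h
    · exact absurd (Nat.le_of_dvd hpos h) (not_le.2 hlt)
  have hpg : IsPGroup p (Subgroup.zpowers (x ^ k)) :=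
    IsPGroup.of_card (n := a) (by rw [Nat.card_zpowers, hy])
  let Q : Sylow p G := hpg.toSylow hnd
  have hQ : (Q : Subgroup G) = Subgroup.zpowers (x ^ k) := rfl
  have hle : Subgroup.zpowers x ≤ Subgroup.normalizer (Q : Set G) := by
    have hxc : Subgroup.zpowers x ≤ Subgroup.centralizer (Q : Set G) := by
      rw [Subgroup.zpowers_le, Subgroup.mem_centralizer_iff]
      intro h hh
      have hh' : h ∈ Subgroup.zpowers (x ^ k) := hh
      obtain ⟨j, rfl⟩ := Subgroup.mem_zpowers_iff.1 hh'
      exact (((Commute.refl x).pow_left k).zpow_left j).eq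
    exact hxc.trans (Subgroup.centralizer_le_normalizer _)
  have hcard : Nat.card (Sylow p G) < p := by
    rw [Sylow.card_eq_index_normalizer Q]
    exact (Nat.le_of_dvd hpos (Subgroup.index_dvd_of_le hle)).trans_lt hlt
  have hone : Nat.card (Sylow p G) = 1 := by
    have := card_sylow_modEq_one p G
    unfold Nat.ModEq at this
    rwa [Nat.mod_eq_of_lt hcard, Nat.mod_eq_of_lt hp.one_lt] at this
  have : Subsingleton (Sylow p G) := (Nat.card_eq_one_iff_unique.1 hone).1
  exact ⟨x ^ k, a, hy, hnd, Sylow.normal_of_subsingleton Q⟩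

/-! ### Action on a cyclic normal Sylow subgroup -/

section Cyclic

variable {G : Type*} [Group G] {p : ℕ} {y : G} {a : ℕ}

/-- A normal Sylow `p`-subgroup contains every element of order dividing `p`. -/
lemma mem_zpowers_of_pow_prime [Fact p.Prime] (hnd : ¬ p ∣ (Subgroup.zpowers y).index)
    [(Subgroup.zpowers y).Normal] {u : G} (hu : u ^ p = 1) : u ∈ Subgroup.zpowers y :=
  mem_of_coprime_pow_mem _ (((Nat.Prime.coprime_iff_not_dvd Fact.out).2 hnd))
    (by rw [hu]; exact one_mem _) (Subgroup.pow_index_mem _ _)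

lemma pow_conj_eq {g : G} {r : ℤ} (h : g * y * g⁻¹ = y ^ r) (j : ℕ) :
    g ^ j * y * (g ^ j)⁻¹ = y ^ (r ^ j) := by
  induction j with
  | zero => simp
  | succ j ih =>
    calc g ^ (j + 1) * y * (g ^ (j + 1))⁻¹ = g ^ j * (g * y * g⁻¹) * (g ^ j)⁻¹ := by
          rw [pow_succ]; group
      _ = (g ^ j * y * (g ^ j)⁻¹) ^ r := by rw [h, conj_zpow]
      _ = _ := by rw [ih, ← zpow_mul, pow_succ]

lemma index_centralizer_coprime (hnd : ¬ p ∣ (Subgroup.zpowers y).index) :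
    ¬ p ∣ (Subgroup.centralizer (Subgroup.zpowers y : Set G)).index := fun h =>
  hnd (h.trans (Subgroup.index_dvd_of_le (Subgroup.le_centralizer _)))

variable [Fact p.Prime]

/-- Among the translates `g * y ^ i`, `i < p`, of an element centralizing `y`, one
is killed by the exponent `|C| / p`, where `C` is the centralizer. -/
lemma exists_translate (hy : orderOf y = p ^ (a + 1))
    (hnd : ¬ p ∣ (Subgroup.zpowers y).index) [hN : (Subgroup.zpowers y).Normal] {e : ℕ}
    (he : Nat.card (Subgroup.centralizer (Subgroup.zpowers y : Set G)) = p * e)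
    {g : G} (hg : g ∈ Subgroup.centralizer (Subgroup.zpowers y : Set G)) :
    ∃ i < p, (g * y ^ i) ^ e = 1 := by
  have hp : p.Prime := Fact.out
  have hcomm : Commute g y :=
    ((Subgroup.mem_centralizer_iff.1 hg) y (Subgroup.mem_zpowers y)).symm
  obtain ⟨k, hk⟩ : p ^ a ∣ e := by
    have := Subgroup.card_dvd_of_le (Subgroup.le_centralizer (Subgroup.zpowers y))
    rw [Nat.card_zpowers, hy, he, pow_succ'] at this
    exact Nat.dvd_of_mul_dvd_mul_left hp.pos this
  have hkp : ¬ p ∣ k := by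
    intro h
    apply hnd
    have h1 := Subgroup.card_mul_index (Subgroup.zpowers y)
    rw [← Subgroup.card_mul_index (Subgroup.centralizer (Subgroup.zpowers y : Set G)), he, hk,
      Nat.card_zpowers, hy] at h1
    have h2 : (Subgroup.zpowers y).index
        = k * (Subgroup.centralizer (Subgroup.zpowers y : Set G)).index := by
      apply Nat.eq_of_mul_eq_mul_left (pow_pos hp.pos (a + 1))
      rw [h1]; ring
    rw [h2]; exact h.mul_right _
  have hup : (g ^ e) ^ p = 1 := by
    rw [← pow_mul, mul_comm, ← he]
    exact orderOf_dvd_iff_pow_eq_one.1 (Subgroup.orderOf_dvd_natCard _ hg)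
  obtain ⟨t, ht⟩ := Subgroup.mem_zpowers_iff.1 (mem_zpowers_of_pow_prime hnd hup)
  obtain ⟨s, hs⟩ : (p : ℤ) ^ a ∣ t := by
    have h1 : y ^ (t * p) = 1 := by rw [zpow_mul, ht]; exact_mod_cast hup
    rw [← orderOf_dvd_iff_zpow_eq_one, hy] at h1
    push_cast at h1
    rw [pow_succ] at h1
    exact Int.dvd_of_mul_dvd_mul_right (by exact_mod_cast hp.ne_zero) h1
  have hk0 : (k : ZMod p) ≠ 0 := by rwa [Ne, ZMod.natCast_eq_zero_iff]
  -- `i` solves the congruence `s + k * i ≡ 0` modulo `p`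
  refine ⟨(-(s : ZMod p) * (k : ZMod p)⁻¹).val, ZMod.val_lt _, ?_⟩
  set i := (-(s : ZMod p) * (k : ZMod p)⁻¹).val with hi
  have hdvd : (p : ℤ) ∣ s + k * i := by
    rw [← ZMod.intCast_zmod_eq_zero_iff_dvd]
    push_cast
    rw [hi, ZMod.natCast_val, ZMod.cast_id]
    field_simp
    ring
  have : (g * y ^ i) ^ e = y ^ (t + i * e) := by
    rw [(hcomm.pow_right i).mul_pow, ← ht, zpow_add, ← pow_mul]; norm_cast
  rw [this, ← orderOf_dvd_iff_zpow_eq_one, hy, hs, hk]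
  push_cast
  rw [pow_succ]
  have h3 : (p : ℤ) ^ a * s + i * ((p : ℤ) ^ a * k) = (p : ℤ) ^ a * (s + k * i) := by ring
  rw [h3]
  exact mul_dvd_mul_left _ hdvd

variable [Fintype G]

/-- An element of order divisible by `p` fixes a subgroup of order `p` of the cyclic normal Sylow
subgroup, hence acts on it as a `p`-element; as its action also has order prime to `p`,
the action is trivial. -/
lemma mem_centralizer_of_dvd_orderOf (hy : orderOf y = p ^ a)
    (hnd : ¬ p ∣ (Subgroup.zpowers y).index) [hN : (Subgroup.zpowers y).Normal]
    {g : G} (hg : p ∣ orderOf g) : g ∈ Subgroup.centralizer (Subgroup.zpowers y : Set G) := by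
  have hp : p.Prime := Fact.out
  have hw0 : orderOf g / p ≠ 0 :=
    (Nat.div_pos (Nat.le_of_dvd (orderOf_pos g) hg) hp.pos).ne'
  have hword : orderOf (g ^ (orderOf g / p)) = p := by
    rw [orderOf_pow_of_dvd hw0 (Nat.div_dvd_of_dvd hg), Nat.div_div_self hg (orderOf_pos g).ne']
  set w := g ^ (orderOf g / p) with hw
  have hwZ : w ∈ Subgroup.zpowers y :=
    mem_zpowers_of_pow_prime hnd (by rw [← hword]; exact pow_orderOf_eq_one w)
  obtain ⟨t, ht⟩ := Subgroup.mem_zpowers_iff.1 hwZ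
  obtain ⟨r, hr⟩ := Subgroup.mem_zpowers_iff.1 (hN.conj_mem y (Subgroup.mem_zpowers y) g)
  have hwr : w ^ (r - 1) = 1 := by
    have h1 : g * w * g⁻¹ = w := by
      rw [hw, ← pow_succ', pow_succ, mul_inv_cancel_right]
    have h2 : g * w * g⁻¹ = w ^ r := by
      rw [← ht, ← conj_zpow, ← hr, ← zpow_mul, ← zpow_mul, mul_comm]
    rw [zpow_sub_one, ← h2, h1, mul_inv_cancel]
  have hpr : (p : ℤ) ∣ r - 1 := by
    rw [← hword]; exact orderOf_dvd_iff_zpow_eq_one.2 hwr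
  have hpa : (p : ℤ) ^ a ∣ r ^ p ^ a - 1 := by
    have := dvd_sub_pow_of_dvd_sub hpr a
    rw [one_pow] at this
    exact (pow_dvd_pow _ (Nat.le_succ a)).trans this
  have hfix : g ^ p ^ a * y * (g ^ p ^ a)⁻¹ = y := by
    rw [pow_conj_eq hr.symm]
    have : y ^ (r ^ p ^ a - 1) = 1 := by
      rw [← orderOf_dvd_iff_zpow_eq_one, hy]; exact_mod_cast hpa
    rwa [zpow_sub_one, mul_inv_eq_one] at this
  refine mem_of_coprime_pow_mem _ ?_ (?_ : g ^ p ^ a ∈ _)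
    (Subgroup.pow_index_mem (Subgroup.centralizer (Subgroup.zpowers y : Set G)) g)
  · exact Nat.Coprime.pow_left _
      ((Nat.Prime.coprime_iff_not_dvd hp).2 (index_centralizer_coprime hnd))
  · rw [Subgroup.mem_centralizer_iff]
    intro h hh
    obtain ⟨j, rfl⟩ := Subgroup.mem_zpowers_iff.1 hh
    have : Commute y (g ^ p ^ a) := (mul_inv_eq_iff_eq_mul.1 hfix).symm
    exact (this.zpow_left j).eq

/-- At least `|C| / p` elements of the centralizer `C` have order dividing `|C| / p`. -/
lemma card_centralizer_le (hy : orderOf y = p ^ (a + 1))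
    (hnd : ¬ p ∣ (Subgroup.zpowers y).index) [hN : (Subgroup.zpowers y).Normal] {e : ℕ}
    (he : Nat.card (Subgroup.centralizer (Subgroup.zpowers y : Set G)) = p * e)
    (S : Finset G) (hS : ∀ g, g ∈ S ↔
      g ∈ Subgroup.centralizer (Subgroup.zpowers y : Set G) ∧ g ^ e = 1) :
    Nat.card (Subgroup.centralizer (Subgroup.zpowers y : Set G)) ≤ S.card * p := by
  classical
  set C := Subgroup.centralizer (Subgroup.zpowers y : Set G)
  have hyC : y ∈ C := Subgroup.le_centralizer _ (Subgroup.mem_zpowers y)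
  have hsub : (Finset.univ.filter (· ∈ C)) ⊆
      (S ×ˢ Finset.range p).image (fun z => z.1 * (y ^ z.2)⁻¹) := by
    intro g hg
    have hgC : g ∈ C := by simpa using hg
    obtain ⟨i, hi, hgi⟩ := exists_translate hy hnd he hgC
    rw [Finset.mem_image]
    exact ⟨(g * y ^ i, i), Finset.mem_product.2
      ⟨(hS _).2 ⟨C.mul_mem hgC (C.pow_mem hyC i), hgi⟩, Finset.mem_range.2 hi⟩, by simp⟩
  have h1 := (Finset.card_le_card hsub).trans Finset.card_image_le
  rw [Finset.card_product, Finset.card_range] at h1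
  rwa [Nat.card_eq_fintype_card, Fintype.card_subtype]

/-- Elements outside the centralizer `C` have order at most `|G| / p`, those in `C`
at most `|C|`, and a `1 / p` fraction of the latter at most `|C| / p`. This bounds the product of
the element orders. -/
lemma prod_bound_of_noncentral (hp3 : 3 ≤ p) (hy : orderOf y = p ^ (a + 1))
    (hnd : ¬ p ∣ (Subgroup.zpowers y).index) [hN : (Subgroup.zpowers y).Normal]
    (hC : Subgroup.centralizer (Subgroup.zpowers y : Set G) ≠ ⊤) :
    (∏ g : G, orderOf g) ^ (2 * p) * 2 ^ (p * Fintype.card G) * p ^ ((p + 1) * Fintype.card G)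
      ≤ (Fintype.card G) ^ (2 * p * Fintype.card G) := by
  classical
  have hp : p.Prime := Fact.out
  have hCdvd : p ∣ Nat.card (Subgroup.centralizer (Subgroup.zpowers y : Set G)) := by
    have := Subgroup.card_dvd_of_le (Subgroup.le_centralizer (Subgroup.zpowers y))
    rw [Nat.card_zpowers, hy, pow_succ] at this
    exact (dvd_mul_left _ _).trans this
  obtain ⟨e, he⟩ := hCdvd
  set S : Finset G := Finset.univ.filter
    (fun g => g ∈ Subgroup.centralizer (Subgroup.zpowers y : Set G) ∧ g ^ e = 1) with hS
  have hcS := card_centralizer_le hy hnd he S (by simp [hS])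
  have hout : ∀ g, g ∉ Subgroup.centralizer (Subgroup.zpowers y : Set G) → ¬ p ∣ orderOf g :=
    fun g hg h => hg (mem_centralizer_of_dvd_orderOf hy hnd h)
  have hm2 : 2 ≤ (Subgroup.centralizer (Subgroup.zpowers y : Set G)).index := by
    have h0 : (Subgroup.centralizer (Subgroup.zpowers y : Set G)).index ≠ 0 :=
      Subgroup.index_ne_zero_of_finite
    have h1 : (Subgroup.centralizer (Subgroup.zpowers y : Set G)).index ≠ 1 :=
      fun h => hC (Subgroup.index_eq_one.1 h)
    omega
  have hcm := Subgroup.card_mul_index (Subgroup.centralizer (Subgroup.zpowers y : Set G))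
  rw [Nat.card_eq_fintype_card (α := G)] at hcm
  set C := Subgroup.centralizer (Subgroup.zpowers y : Set G) with hCdef
  set m := C.index with hm
  set c := Nat.card C with hc
  set n := Fintype.card G with hn
  set r := ∏ g : G, orderOf g with hr
  have hpn : p ∣ n := by rw [← hcm, he]; exact (dvd_mul_right p e).mul_right m
  have hn0 : 0 < n := Fintype.card_pos
  have hpt : ∀ g : G, orderOf g * ((if g ∈ C then m else p) * (if g ∈ S then p else 1)) ≤ n := by
    intro g
    by_cases hg : g ∈ C
    · by_cases hgS : g ∈ S
      · have h1 : orderOf g ∣ e := orderOf_dvd_of_pow_eq_one (by simpa [hS, hg] using hgS)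
        rw [if_pos hg, if_pos hgS]
        apply Nat.le_of_dvd hn0
        rw [← hcm, he]
        calc orderOf g * (m * p) ∣ e * (m * p) := Nat.mul_dvd_mul_right h1 _
          _ = p * e * m := by ring
      · rw [if_pos hg, if_neg hgS, mul_one]
        apply Nat.le_of_dvd hn0
        rw [← hcm]
        exact Nat.mul_dvd_mul_right (Subgroup.orderOf_dvd_natCard C hg) _
    · have hgS : g ∉ S := by simp [hS, hg]
      rw [if_neg hg, if_neg hgS, mul_one]
      apply Nat.le_of_dvd hn0
      exact Nat.Coprime.mul_dvd_of_dvd_of_dvd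
        ((Nat.Prime.coprime_iff_not_dvd hp).2 (hout g hg)).symm (orderOf_dvd_card) hpn
  have hcardC : (Finset.univ.filter (· ∈ C)).card = c := by
    rw [hc, Nat.card_eq_fintype_card, Fintype.card_subtype]
  have hcardC' : (Finset.univ.filter (fun g => ¬ g ∈ C)).card = n - c := by
    have := Finset.card_filter_add_card_filter_not (s := (Finset.univ : Finset G)) (· ∈ C)
    rw [hcardC, Finset.card_univ] at this
    omega
  have hprod : r * (m ^ c * p ^ (n - c) * p ^ S.card) ≤ n ^ n := by
    have := Finset.prod_le_prod' (s := (Finset.univ : Finset G)) (fun g _ => hpt g)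
    rw [Finset.prod_mul_distrib, Finset.prod_mul_distrib, Finset.prod_ite, Finset.prod_ite,
      Finset.prod_const, Finset.prod_const, Finset.prod_const, Finset.prod_const,
      Finset.prod_const, Finset.card_univ, hcardC, hcardC', one_pow, mul_one,
      Finset.filter_mem_eq_inter, Finset.univ_inter] at this
    exact this
  obtain ⟨j, hj⟩ := Nat.exists_eq_add_of_le hm2
  have hnc : n - c = c * (1 + j) := by
    rw [← hcm, hj, show 2 + j = (1 + j) + 1 by ring, mul_add c (1 + j) 1, mul_one]; omega
  have hkey : 2 ^ (p * m) * p ^ ((p + 1) * m) ≤ m ^ (2 * p) * p ^ (2 * p * (1 + j) + 2) := by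
    have h1 : (2 ^ p) ^ j ≤ (p ^ (p - 1)) ^ j := Nat.pow_le_pow_left (two_pow_le_pow_pred hp3) j
    have h2 : 2 ^ (2 * p) ≤ m ^ (2 * p) := Nat.pow_le_pow_left hm2 _
    have h3 : (p - 1) * j + (p + 1) * m = 2 * p * (1 + j) + 2 := by
      obtain ⟨q, rfl⟩ := Nat.exists_eq_add_of_le hp3
      rw [hj, show 3 + q - 1 = 2 + q by omega]; ring
    calc 2 ^ (p * m) * p ^ ((p + 1) * m)
        = 2 ^ (2 * p) * ((2 ^ p) ^ j * p ^ ((p + 1) * m)) := by rw [hj]; ring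
      _ ≤ m ^ (2 * p) * ((p ^ (p - 1)) ^ j * p ^ ((p + 1) * m)) := by gcongr
      _ = _ := by rw [← pow_mul, ← pow_add, h3]
  have hkey' : 2 ^ (p * n) * p ^ ((p + 1) * n)
      ≤ (m ^ c * p ^ (n - c) * p ^ S.card) ^ (2 * p) := by
    calc 2 ^ (p * n) * p ^ ((p + 1) * n) = (2 ^ (p * m) * p ^ ((p + 1) * m)) ^ c := by
          rw [← hcm]; ring
      _ ≤ (m ^ (2 * p) * p ^ (2 * p * (1 + j) + 2)) ^ c := Nat.pow_le_pow_left hkey c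
      _ = (m ^ c * p ^ (n - c)) ^ (2 * p) * p ^ (2 * c) := by rw [hnc]; ring
      _ ≤ (m ^ c * p ^ (n - c)) ^ (2 * p) * p ^ (2 * (S.card * p)) := by
          have := hp.pos
          gcongr
      _ = _ := by ring
  calc r ^ (2 * p) * 2 ^ (p * n) * p ^ ((p + 1) * n)
      = r ^ (2 * p) * (2 ^ (p * n) * p ^ ((p + 1) * n)) := by ring
    _ ≤ r ^ (2 * p) * (m ^ c * p ^ (n - c) * p ^ S.card) ^ (2 * p) := Nat.mul_le_mul_left _ hkey'
    _ = (r * (m ^ c * p ^ (n - c) * p ^ S.card)) ^ (2 * p) := by ring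
    _ ≤ (n ^ n) ^ (2 * p) := Nat.pow_le_pow_left hprod _
    _ = _ := by ring

end Cyclic

/-! ### The decomposition of `G` -/

theorem stmt17 (G : Type*) [Group G] [Fintype G] (p : ℕ) (hp : p.Prime) (hodd : Odd p)
    (hpd : p ∣ Fintype.card G)
    -- P is the largest normal p-subgroup O_p(G)
    (P : Subgroup G) (hPn : P.Normal) (hPp : IsPGroup p P)
    (hPmax : ∀ Q : Subgroup G, Q.Normal → IsPGroup p Q → Q ≤ P)
    -- N is the largest normal p'-subgroup O_{p'}(G)
    (N : Subgroup G) (hNn : N.Normal) (hNp : Nat.Coprime (Nat.card N) p)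
    (hNmax : ∀ M : Subgroup G, M.Normal → Nat.Coprime (Nat.card M) p → M ≤ N)
    (hl : lfun G > (2 : ℝ) ^ (-(1 / 2 : ℝ)) * (p : ℝ) ^ (-(((p : ℝ) + 1) / (2 * (p : ℝ))))) :
    IsCyclic P ∧ P ⊓ N = ⊥ ∧ P ⊔ N = ⊤ ∧ IsPNilpotent p G := by
  have : Fact p.Prime := ⟨hp⟩
  have hp3 : 3 ≤ p := by
    have := hp.two_le
    obtain ⟨q, rfl⟩ := hodd
    omega
  have H := nat_of_lfun_gt G p hp hl
  obtain ⟨x, hx⟩ := exists_card_lt_orderOf_mul G p hp3 H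
  obtain ⟨y, a, hy, hnd, hZn⟩ := exists_normal_cyclic_sylow G p x hx
  have hC : Subgroup.centralizer (Subgroup.zpowers y : Set G) = ⊤ := by
    by_contra hC
    cases a with
    | zero =>
      apply hnd
      have h1 := Subgroup.card_mul_index (Subgroup.zpowers y)
      rw [Nat.card_zpowers, hy, pow_zero, one_mul, Nat.card_eq_fintype_card] at h1
      rwa [h1]
    | succ a => exact absurd H (not_lt.2 (prod_bound_of_noncentral hp3 hy hnd hC))
  have hpg : IsPGroup p (Subgroup.zpowers y) :=
    IsPGroup.of_card (n := a) (by rw [Nat.card_zpowers, hy])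
  let Q : Sylow p G := hpg.toSylow hnd
  have hQ : (Q : Subgroup G) = Subgroup.zpowers y := rfl
  have hPQ : P = Subgroup.zpowers y := Q.is_maximal' hPp (hPmax _ hZn hpg)
  have hcompl := MonoidHom.ker_transferSylow_isComplement' Q
    (show _ ≤ Subgroup.centralizer (Subgroup.zpowers y : Set G) by rw [hC]; exact le_top)
  set K := (MonoidHom.transferSylow Q
    (show _ ≤ Subgroup.centralizer (Subgroup.zpowers y : Set G) by rw [hC]; exact le_top)).ker
  have hKcard : Nat.card K = (Subgroup.zpowers y).index := hcompl.index_eq_card.symm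
  have hKc : Nat.Coprime (Nat.card K) p := by
    rw [hKcard]; exact ((Nat.Prime.coprime_iff_not_dvd hp).2 hnd).symm
  have hKn : K.Normal := MonoidHom.normal_ker _
  have hKidx : K.index = p ^ a := by
    rw [hcompl.symm.index_eq_card, hQ, Nat.card_zpowers, hy]
  have hKN : K ≤ N := hNmax K hKn hKc
  refine ⟨by rw [hPQ]; infer_instance, ?_, ?_, K, hKn, hKc, a, hKidx⟩
  · apply disjoint_iff.1
    apply Subgroup.disjoint_of_coprime_natCard
    rw [hPQ, Nat.card_zpowers, hy]
    exact (Nat.Coprime.pow_right a hNp).symm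
  · rw [eq_top_iff, ← hcompl.sup_eq_top, hQ, ← hPQ, sup_comm]
    exact sup_le_sup_left hKN P
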